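/- arXiv:1508.06132 — 2 statements merged into one kernel-verified Lean document; each statement's English description precedes it below -/
import Mathlib

section
/- Let μ be the standard Gaussian measure on ℝⁿ, let Ω = {x ∈ ℝⁿ : g_j(x) ≥ 0, j = 1,…,m}, and let f ∈ ℝ[x] be a polynomial that is nonnegative on Ω. Then the sequence (ō_d(f))_{d ≥ d₀} is monotone non-increasing (ō_{d+1}(f) ≤ ō_d(f) for all d ≥ d₀) and satisfies ō_d(f) ≥ ∫_Ω f dμ for every d ≥ d₀. -/
open MeasureTheory MvPolynomial Filter Topology

noncomputable def gaussianMeasure (n : ℕ) : Measure (Fin n → ℝ) :=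
  volume.withDensity fun x =>
    ENNReal.ofReal ((2 * Real.pi) ^ (-(n : ℝ) / 2) * Real.exp (-(∑ i, x i ^ 2) / 2))

noncomputable def expMeasure (n : ℕ) : Measure (Fin n → ℝ) :=
  (volume.restrict {x : Fin n → ℝ | ∀ i, 0 ≤ x i}).withDensity fun x =>
    ENNReal.ofReal (Real.exp (-(∑ i, x i)))

/-- degree |α| of a multi-index -/
def fdeg {n : ℕ} (α : Fin n →₀ ℕ) : ℕ := α.sum fun _ e => e

/-- Riesz functional `L_u(p)` of a (pseudo-)moment sequence `u`. -/
noncomputable def riesz {n : ℕ} (u : (Fin n →₀ ℕ) → ℝ) (p : MvPolynomial (Fin n) ℝ) : ℝ :=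
  ∑ α ∈ p.support, p.coeff α * u α

/-- Positive semidefiniteness of the moment matrix `M_d(u)`, expressed via its
quadratic form: `L_u(p²) ≥ 0` for all polynomials of degree at most `d`. -/
def MomPSD {n : ℕ} (d : ℕ) (u : (Fin n →₀ ℕ) → ℝ) : Prop :=
  ∀ p : MvPolynomial (Fin n) ℝ, p.totalDegree ≤ d → 0 ≤ riesz u (p ^ 2)

/-- Positive semidefiniteness of the localizing matrix `M_k(g u)`, expressed via its
quadratic form: `L_u(g·p²) ≥ 0` for all polynomials of degree at most `k`. -/
def LocPSD {n : ℕ} (k : ℕ) (g : MvPolynomial (Fin n) ℝ) (u : (Fin n →₀ ℕ) → ℝ) : Prop :=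
  ∀ p : MvPolynomial (Fin n) ℝ, p.totalDegree ≤ k → 0 ≤ riesz u (g * p ^ 2)

/-- moments of the standard Gaussian measure -/
noncomputable def gmom (n : ℕ) (α : Fin n →₀ ℕ) : ℝ :=
  ∫ x, (∏ i, x i ^ α i) ∂gaussianMeasure n

/-- `d_j = ⌈deg g / 2⌉` -/
def dHalf {n : ℕ} (g : MvPolynomial (Fin n) ℝ) : ℕ := (g.totalDegree + 1) / 2

/-- the basic closed semi-algebraic set determined by the polynomials `g_j` -/
def semialg {n m : ℕ} (g : Fin m → MvPolynomial (Fin n) ℝ) : Set (Fin n → ℝ) :=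
  {x | ∀ j, 0 ≤ eval x (g j)}

/-- feasibility for the primal semidefinite relaxation of order `d` (Gaussian measure) -/
def Feasible {n m : ℕ} (g : Fin m → MvPolynomial (Fin n) ℝ) (d : ℕ)
    (u v : (Fin n →₀ ℕ) → ℝ) : Prop :=
  (∀ α : Fin n →₀ ℕ, fdeg α ≤ 2 * d → u α + v α = gmom n α) ∧
  MomPSD d u ∧ MomPSD d v ∧ ∀ j, LocPSD (d - dHalf (g j)) (g j) u

/-- the value `ō_d(f)` of the primal semidefinite relaxation of order `d` -/
noncomputable def obar {n m : ℕ} (g : Fin m → MvPolynomial (Fin n) ℝ) (d : ℕ)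
    (f : MvPolynomial (Fin n) ℝ) : ℝ :=
  sSup {r | ∃ u v, Feasible g d u v ∧ r = riesz u f}

/-- the Stokes polynomial `p_{i,α} = ∂(x^α f)/∂x_i − x_i · x^α f` (Gaussian case) -/
noncomputable def pStokesG {n : ℕ} (f : MvPolynomial (Fin n) ℝ) (i : Fin n) (α : Fin n →₀ ℕ) :
    MvPolynomial (Fin n) ℝ :=
  pderiv i (monomial α 1 * f) - X i * (monomial α 1 * f)

/-- the Stokes polynomial `p_{i,α} = ∂(x^α f)/∂x_i − x^α f` (exponential case) -/
noncomputable def pStokesE {n : ℕ} (f : MvPolynomial (Fin n) ℝ) (i : Fin n) (α : Fin n →₀ ℕ) :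
    MvPolynomial (Fin n) ℝ :=
  pderiv i (monomial α 1 * f) - monomial α 1 * f

/-- feasibility for the Stokes-augmented semidefinite relaxation of order `d` -/
def FeasibleS {n m : ℕ} (g : Fin m → MvPolynomial (Fin n) ℝ) (f : MvPolynomial (Fin n) ℝ)
    (d : ℕ) (u v : (Fin n →₀ ℕ) → ℝ) : Prop :=
  Feasible g d u v ∧
  ∀ (i : Fin n) (α : Fin n →₀ ℕ), (pStokesG f i α).totalDegree ≤ 2 * d →
    riesz u (pStokesG f i α) = 0

/-- the value `ω̄_d` of the Stokes-augmented semidefinite relaxation of order `d` -/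
noncomputable def omegabar {n m : ℕ} (g : Fin m → MvPolynomial (Fin n) ℝ)
    (f : MvPolynomial (Fin n) ℝ) (d : ℕ) : ℝ :=
  sSup {r | ∃ u v, FeasibleS g f d u v ∧ r = u 0}

/-- `p ∈ Σ[x]_d`: `p` is a sum of squares of polynomials of degree at most `d` -/
def IsSOS {n : ℕ} (d : ℕ) (p : MvPolynomial (Fin n) ℝ) : Prop :=
  ∃ (k : ℕ) (q : Fin k → MvPolynomial (Fin n) ℝ),
    (∀ i, (q i).totalDegree ≤ d) ∧ p = ∑ i, q i ^ 2

/-- membership in the truncated quadratic module `Q_{2d}(Ω)` -/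
def InQM {n m : ℕ} (g : Fin m → MvPolynomial (Fin n) ℝ) (d : ℕ)
    (p : MvPolynomial (Fin n) ℝ) : Prop :=
  ∃ (σ₀ : MvPolynomial (Fin n) ℝ) (σ : Fin m → MvPolynomial (Fin n) ℝ),
    IsSOS d σ₀ ∧ (∀ j, IsSOS (d - dHalf (g j)) (σ j)) ∧ p = σ₀ + ∑ j, σ j * g j

theorem riesz_superset {n : ℕ} (u : (Fin n →₀ ℕ) → ℝ) (p : MvPolynomial (Fin n) ℝ)
    (S : Finset (Fin n →₀ ℕ)) (h : p.support ⊆ S) : riesz u p = ∑ α ∈ S, p.coeff α * u α := by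
  unfold riesz
  refine Finset.sum_subset h fun α _ hα => ?_
  rw [MvPolynomial.notMem_support_iff.mp hα, zero_mul]

theorem riesz_add {n : ℕ} (u : (Fin n →₀ ℕ) → ℝ) (p q : MvPolynomial (Fin n) ℝ) :
    riesz u (p + q) = riesz u p + riesz u q := by
  classical
  rw [riesz_superset u (p + q) (p.support ∪ q.support) MvPolynomial.support_add,
    riesz_superset u p (p.support ∪ q.support) Finset.subset_union_left,
    riesz_superset u q (p.support ∪ q.support) Finset.subset_union_right, ← Finset.sum_add_distrib]
  exact Finset.sum_congr rfl fun α _ => by rw [coeff_add, add_mul]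

theorem riesz_monomial {n : ℕ} (u : (Fin n →₀ ℕ) → ℝ) (α : Fin n →₀ ℕ) (c : ℝ) :
    riesz u (monomial α c) = c * u α := by
  classical
  rw [riesz_superset u _ {α} support_monomial_subset]
  simp

theorem integrable_1d (k : ℕ) :
    Integrable (fun x : ℝ => x ^ k * Real.exp (-(x ^ 2) / 2)) := by
  have h := integrable_rpow_mul_exp_neg_mul_sq (b := 1 / 2) (by norm_num) (s := (k : ℝ))
    (by have : (0 : ℝ) ≤ k := Nat.cast_nonneg k
        linarith)
  refine h.congr (Eventually.of_forall fun x => ?_)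
  simp only [Real.rpow_natCast]
  congr 2
  ring

theorem integrable_mono {n : ℕ} (α : Fin n →₀ ℕ) :
    Integrable (fun x : Fin n → ℝ => ∏ i, x i ^ α i) (gaussianMeasure n) := by
  unfold gaussianMeasure
  rw [integrable_withDensity_iff (by fun_prop) (Eventually.of_forall fun x => ENNReal.ofReal_lt_top)]
  have h : Integrable (fun x : Fin n → ℝ => ∏ i, (x i ^ α i * Real.exp (-(x i ^ 2) / 2))) :=
    Integrable.fintype_prod (fun i => integrable_1d (α i))
  refine (h.const_mul ((2 * Real.pi) ^ (-(n : ℝ) / 2))).congr (Eventually.of_forall fun x => ?_)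
  have : 0 ≤ (2 * Real.pi) ^ (-(n : ℝ) / 2) * Real.exp (-(∑ i, x i ^ 2) / 2) := by positivity
  simp only [ENNReal.toReal_ofReal this]
  rw [Finset.prod_mul_distrib, ← Real.exp_sum, ← Finset.sum_div, Finset.sum_neg_distrib]
  ring

theorem riesz_integral {n : ℕ} (s : Set (Fin n → ℝ)) (p : MvPolynomial (Fin n) ℝ) :
    riesz (fun α => ∫ x in s, (∏ i, x i ^ α i) ∂gaussianMeasure n) p
      = ∫ x in s, eval x p ∂gaussianMeasure n := by
  unfold riesz
  simp_rw [MvPolynomial.eval_eq']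
  rw [integral_finsetSum _ fun α _ => ((integrable_mono α).integrableOn).const_mul _]
  exact Finset.sum_congr rfl fun α _ => (integral_const_mul _ _).symm

theorem measurableSet_semialg {n m : ℕ} (g : Fin m → MvPolynomial (Fin n) ℝ) :
    MeasurableSet (semialg g) := by
  have : semialg g = ⋂ j, {x | 0 ≤ eval x (g j)} := by ext x; simp [semialg]
  rw [this]
  exact MeasurableSet.iInter fun j =>
    (isClosed_le continuous_const (MvPolynomial.continuous_eval (g j))).measurableSet

theorem feasible_moments {n m : ℕ} (g : Fin m → MvPolynomial (Fin n) ℝ) (d : ℕ) :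
    Feasible g d (fun α => ∫ x in semialg g, (∏ i, x i ^ α i) ∂gaussianMeasure n)
      (fun α => ∫ x in (semialg g)ᶜ, (∏ i, x i ^ α i) ∂gaussianMeasure n) := by
  refine ⟨fun α _ => integral_add_compl (measurableSet_semialg g) (integrable_mono α),
    fun p _ => ?_, fun p _ => ?_, fun j p _ => ?_⟩
  · rw [riesz_integral]
    exact integral_nonneg fun x => by simp only [map_pow]; exact sq_nonneg _
  · rw [riesz_integral]
    exact integral_nonneg fun x => by simp only [map_pow]; exact sq_nonneg _
  · rw [riesz_integral]
    refine setIntegral_nonneg (measurableSet_semialg g) fun x hx => ?_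
    simp only [map_pow, map_mul]
    exact mul_nonneg (hx j) (sq_nonneg _)

theorem fdeg_add {n : ℕ} (β γ : Fin n →₀ ℕ) : fdeg (β + γ) = fdeg β + fdeg γ := by
  unfold fdeg
  exact Finsupp.sum_add_index' (fun _ => rfl) fun _ _ _ => rfl

theorem exists_split {n : ℕ} (α : Fin n →₀ ℕ) (k : ℕ) (hk : k ≤ fdeg α) :
    ∃ β γ, α = β + γ ∧ fdeg β = k := by
  induction k with
  | zero => exact ⟨0, α, by simp, by simp [fdeg]⟩
  | succ k ih =>
    obtain ⟨β, γ, h, hβ⟩ := ih (by omega)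
    have hγ : γ ≠ 0 := by
      rintro rfl
      rw [h, add_zero] at hk
      omega
    obtain ⟨i, hi⟩ := Finsupp.ne_iff.mp hγ
    have hle : Finsupp.single i 1 ≤ γ := by
      rw [Finsupp.single_le_iff]
      exact Nat.one_le_iff_ne_zero.mpr hi
    refine ⟨β + Finsupp.single i 1, γ - Finsupp.single i 1, ?_, ?_⟩
    · rw [add_assoc, add_tsub_cancel_of_le hle, h]
    · rw [fdeg_add, hβ]
      simp [fdeg]

theorem mom_diag {n d : ℕ} {u : (Fin n →₀ ℕ) → ℝ} (h : MomPSD d u) (β : Fin n →₀ ℕ)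
    (hβ : fdeg β ≤ d) : 0 ≤ u (β + β) := by
  have h1 := h (monomial β 1) ((totalDegree_monomial_le β 1).trans hβ)
  rw [sq, monomial_mul, riesz_monomial] at h1
  simpa using h1

theorem mom_off {n d : ℕ} {u : (Fin n →₀ ℕ) → ℝ} (h : MomPSD d u) (β γ : Fin n →₀ ℕ)
    (hβ : fdeg β ≤ d) (hγ : fdeg γ ≤ d) : |u (β + γ)| ≤ (u (β + β) + u (γ + γ)) / 2 := by
  have key : ∀ c : ℝ, 0 ≤ u (β + β) + 2 * c * u (β + γ) + c ^ 2 * u (γ + γ) := by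
    intro c
    have h1 := h (monomial β 1 + monomial γ c) ((totalDegree_add _ _).trans
      (max_le ((totalDegree_monomial_le β 1).trans hβ) ((totalDegree_monomial_le γ c).trans hγ)))
    have e : (monomial β 1 + monomial γ c : MvPolynomial (Fin n) ℝ) ^ 2
        = monomial (β + β) 1 + monomial (β + γ) c + monomial (β + γ) c
          + monomial (γ + γ) (c * c) := by
      have e1 : (monomial (β + β) 1 : MvPolynomial (Fin n) ℝ) = monomial β 1 * monomial β 1 := by
        rw [monomial_mul, one_mul]
      have e2 : (monomial (β + γ) c : MvPolynomial (Fin n) ℝ) = monomial β 1 * monomial γ c := by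
        rw [monomial_mul, one_mul]
      have e3 : (monomial (γ + γ) (c * c) : MvPolynomial (Fin n) ℝ)
          = monomial γ c * monomial γ c := by rw [monomial_mul]
      rw [e1, e2, e3]
      ring
    rw [e, riesz_add, riesz_add, riesz_add, riesz_monomial, riesz_monomial, riesz_monomial] at h1
    linarith
  have := key 1
  have := key (-1)
  rw [abs_le]
  constructor <;> linarith

theorem feasible_bound {n m : ℕ} (g : Fin m → MvPolynomial (Fin n) ℝ) (d : ℕ)
    (α : Fin n →₀ ℕ) (hα : fdeg α ≤ 2 * d) : ∃ C : ℝ, ∀ u v, Feasible g d u v → |u α| ≤ C := by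
  obtain ⟨β, γ, h, hβ⟩ := exists_split α (min d (fdeg α)) (min_le_right _ _)
  have hs := fdeg_add β γ
  rw [← h] at hs
  have hβ' : fdeg β ≤ d := by omega
  have hγ' : fdeg γ ≤ d := by omega
  refine ⟨(gmom n (β + β) + gmom n (γ + γ)) / 2, fun u v hf => ?_⟩
  obtain ⟨h1, h2, h3, -⟩ := hf
  have a := mom_off h2 β γ hβ' hγ'
  rw [← h] at a
  have b := h1 (β + β) (by rw [fdeg_add]; omega)
  have c := h1 (γ + γ) (by rw [fdeg_add]; omega)
  have b' := mom_diag h3 β hβ'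
  have c' := mom_diag h3 γ hγ'
  linarith

theorem obar_bdd {n m : ℕ} (g : Fin m → MvPolynomial (Fin n) ℝ) (d : ℕ)
    (f : MvPolynomial (Fin n) ℝ) (hfd : f.totalDegree ≤ 2 * d) :
    BddAbove {r | ∃ u v, Feasible g d u v ∧ r = riesz u f} := by
  have hC : ∀ α : Fin n →₀ ℕ, ∃ C : ℝ, α ∈ f.support → ∀ u v, Feasible g d u v → |u α| ≤ C := by
    intro α
    by_cases hα : α ∈ f.support
    · obtain ⟨C, hC⟩ := feasible_bound g d α ((le_totalDegree hα).trans hfd)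
      exact ⟨C, fun _ => hC⟩
    · exact ⟨0, fun h => absurd h hα⟩
  choose C hC using hC
  refine ⟨∑ α ∈ f.support, |f.coeff α| * C α, ?_⟩
  rintro r ⟨u, v, hf, rfl⟩
  refine Finset.sum_le_sum fun α hα => ?_
  refine (le_abs_self _).trans ?_
  rw [abs_mul]
  exact mul_le_mul_of_nonneg_left (hC α hα u v hf) (abs_nonneg _)

theorem feasible_mono {n m : ℕ} {g : Fin m → MvPolynomial (Fin n) ℝ} {d : ℕ}
    {u v : (Fin n →₀ ℕ) → ℝ} (h : Feasible g (d + 1) u v) : Feasible g d u v := by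
  obtain ⟨h1, h2, h3, h4⟩ := h
  exact ⟨fun α hα => h1 α (by omega), fun p hp => h2 p (by omega), fun p hp => h3 p (by omega),
    fun j p hp => h4 j p (by omega)⟩

/-- for the Gaussian measure and `f` nonnegative on `Ω = {x : g_j(x) ≥ 0}`,
the sequence `(ō_d(f))_{d ≥ d₀}` is monotone non-increasing and `ō_d(f) ≥ ∫_Ω f dμ`. -/
theorem stmt8 {n m : ℕ} (g : Fin m → MvPolynomial (Fin n) ℝ)
    (f : MvPolynomial (Fin n) ℝ) (hf0 : ∀ x ∈ semialg g, 0 ≤ eval x f)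
    (d : ℕ) (hd : ∀ j, dHalf (g j) ≤ d) (hfd : f.totalDegree ≤ 2 * d) :
    obar g (d + 1) f ≤ obar g d f ∧
    (∫ x in semialg g, eval x f ∂gaussianMeasure n) ≤ obar g d f := by
  constructor
  · refine csSup_le_csSup (obar_bdd g d f hfd) ⟨_, _, _, feasible_moments g (d + 1), rfl⟩ ?_
    rintro r ⟨u, v, h, rfl⟩
    exact ⟨u, v, feasible_mono h, rfl⟩
  · exact le_csSup (obar_bdd g d f hfd)
      ⟨_, _, feasible_moments g d, (riesz_integral _ _).symm⟩
end

section
/- Let μ be the standard Gaussian measure on ℝⁿ, let Ω = {x ∈ ℝⁿ : g_j(x) ≥ 0, j = 1,…,m} be a basic closed semi-algebraic set, and let f ∈ ℝ[x] vanish on the boundary ∂Ω. For i ∈ {1,…,n} and α ∈ ℕⁿ, set p_{i,α}(x) = ∂(x^α f(x))/∂x_i − x_i · x^α f(x), and for M > 0 put Ω_M = Ω ∩ {x : ‖x‖ ≤ M}. Then there exists a constant C > 0, depending only on n, f and α (one may take C = 2 π^{(n+1)/2} ‖f‖₁ / Γ((n+1)/2), where ‖f‖₁ is the sum of the absolute values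 of the coefficients of f), such that |∫_{Ω_M} p_{i,α} dμ| ≤ C · M^{|α| + n + deg f} · exp(−M²/2) for all M ≥ 1. In particular, ∫_{Ω_M} p_{i,α} dμ → 0 as M → ∞. -/
open MeasureTheory MvPolynomial Filter Topology

/-- One-dimensional fundamental theorem of calculus on a closed set on whose boundary
the function vanishes. -/
theorem aux_oneDim (S : Set ℝ) (hS : IsClosed S) (h h' : ℝ → ℝ)
    (hd : ∀ t, HasDerivAt h (h' t) t) (hc : Continuous h')
    (h0 : ∀ t ∈ frontier S, h t = 0) (a b : ℝ) (hab : a ≤ b) :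
    |∫ t in Set.Icc a b, S.indicator h' t| ≤ |h a| + |h b| := by
  have hcont : Continuous h := continuous_iff_continuousAt.2 fun t => (hd t).continuousAt
  set Z : Set ℝ := {t | h t = 0} with hZ
  have hcount : {x ∈ Z | 𝓝[Z ∩ Set.Ioi x] x = ⊥}.Countable :=
    countable_setOfPred_isolated_right_within
  have hF : Continuous (S.indicator h) := continuous_indicator h0 hcont.continuousOn
  have key : ∫ t in a..b, S.indicator h' t = S.indicator h b - S.indicator h a := by
    apply integral_eq_of_hasDerivAt_off_countable_of_le _ _ hab hcount hF.continuousOn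
    · rintro t ⟨-, ht⟩
      by_cases h1 : t ∈ interior S
      · have : S.indicator h' t = h' t := Set.indicator_of_mem (interior_subset h1) _
        rw [this]
        refine (hd t).congr_of_eventuallyEq ?_
        filter_upwards [mem_interior_iff_mem_nhds.1 h1] with z hz
        exact Set.indicator_of_mem hz _
      · by_cases h2 : t ∈ S
        · have hfr : t ∈ frontier S := by rw [hS.frontier_eq]; exact ⟨h2, h1⟩
          have ht0 : h t = 0 := h0 t hfr
          have hd0 : h' t = 0 := by
            by_contra hne
            apply ht
            refine ⟨ht0, ?_⟩
            have := (hd t).eventually_ne (c := 0) hne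
            have h3 : ∀ᶠ z in 𝓝[>] t, h z ≠ 0 :=
              this.filter_mono (nhdsWithin_mono _ (fun z hz => ne_of_gt hz))
            rw [Set.inter_comm, nhdsWithin_inter']
            rw [← Filter.empty_mem_iff_bot, Filter.mem_inf_principal]
            filter_upwards [h3] with z hz hz2
            exact hz hz2
          rw [Set.indicator_of_mem h2, hd0]
          have hh := hd t
          rw [hd0, hasDerivAt_iff_isLittleO] at hh
          rw [hasDerivAt_iff_isLittleO]
          refine Asymptotics.IsBigO.trans_isLittleO (Asymptotics.IsBigO.of_bound 1 ?_) hh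
          filter_upwards with z
          have e1 : S.indicator h t = 0 := by rw [Set.indicator_of_mem h2, ht0]
          rw [e1, ht0]
          simp only [sub_zero, smul_zero, one_mul]
          exact norm_indicator_le_norm_self _ _
        · have : S.indicator h' t = 0 := Set.indicator_of_notMem h2 _
          rw [this]
          refine (hasDerivAt_const t (0:ℝ)).congr_of_eventuallyEq ?_
          filter_upwards [hS.isOpen_compl.mem_nhds h2] with z hz
          exact Set.indicator_of_notMem hz _
    · rw [intervalIntegrable_iff_integrableOn_Ioc_of_le hab]
      exact ((hc.integrableOn_Icc).mono_set Set.Ioc_subset_Icc_self).indicator hS.measurableSet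
  rw [integral_Icc_eq_integral_Ioc, ← intervalIntegral.integral_of_le hab, key]
  have e1 : |S.indicator h b| ≤ |h b| := norm_indicator_le_norm_self h b
  have e2 : |S.indicator h a| ≤ |h a| := norm_indicator_le_norm_self h a
  have := abs_sub (S.indicator h b) (S.indicator h a)
  linarith

theorem aux_hasDerivAt {k : ℕ} (i : Fin (k+1)) (y : Fin k → ℝ)
    (p : MvPolynomial (Fin (k+1)) ℝ) (t : ℝ) :
    HasDerivAt (fun t : ℝ => eval (i.insertNth (α := fun _ => ℝ) t y) p)
      (eval (i.insertNth (α := fun _ => ℝ) t y) (pderiv i p)) t := by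
  induction p using MvPolynomial.induction_on with
  | C a => simpa using hasDerivAt_const t a
  | add p q hp hq => simpa using hp.fun_add hq
  | mul_X p j hp =>
    have hX : HasDerivAt (fun t : ℝ => i.insertNth (α := fun _ => ℝ) t y j)
        (eval (i.insertNth (α := fun _ => ℝ) t y) (pderiv i (X j : MvPolynomial (Fin (k+1)) ℝ))) t := by
      rcases Fin.eq_self_or_eq_succAbove i j with rfl | ⟨l, rfl⟩
      · simpa using hasDerivAt_id' t
      · simpa [pderiv_X, Pi.single_apply] using hasDerivAt_const t (y l)
    have := hp.fun_mul hX
    simp only [map_mul, eval_X, Derivation.leibniz, smul_eq_mul, map_add]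
    exact this.congr_deriv (by ring)

/-- sum of absolute values of the coefficients -/
noncomputable def coeffNorm {n : ℕ} (f : MvPolynomial (Fin n) ℝ) : ℝ :=
  ∑ d ∈ f.support, |f.coeff d|

theorem aux_prod_bound {n : ℕ} (d : Fin n →₀ ℕ) (x : Fin n → ℝ) (M : ℝ)
    (hx : ∀ j, |x j| ≤ M) : |∏ j, x j ^ d j| ≤ M ^ (fdeg d) := by
  rw [Finset.abs_prod]
  have : fdeg d = ∑ j, d j := by
    unfold fdeg; rw [Finsupp.sum_fintype]; simp
  rw [this, ← Finset.prod_pow_eq_pow_sum]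
  refine Finset.prod_le_prod (fun _ _ => abs_nonneg _) fun j _ => ?_
  rw [abs_pow]
  exact pow_le_pow_left₀ (abs_nonneg _) (hx j) _

theorem aux_bound {n : ℕ} (f : MvPolynomial (Fin n) ℝ) (x : Fin n → ℝ) (M : ℝ) (hM : 1 ≤ M)
    (hx : ∀ j, |x j| ≤ M) : |eval x f| ≤ coeffNorm f * M ^ f.totalDegree := by
  rw [eval_eq', coeffNorm, Finset.sum_mul]
  refine (Finset.abs_sum_le_sum_abs _ _).trans (Finset.sum_le_sum fun d hd => ?_)
  rw [abs_mul]
  refine mul_le_mul_of_nonneg_left ?_ (abs_nonneg _)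
  refine (aux_prod_bound d x M hx).trans (pow_le_pow_right₀ hM ?_)
  exact le_totalDegree hd

theorem aux_bound2 {n : ℕ} (f : MvPolynomial (Fin n) ℝ) (α : Fin n →₀ ℕ)
    (x : Fin n → ℝ) (M : ℝ) (hM : 1 ≤ M) (hx : ∀ j, |x j| ≤ M) :
    |eval x (monomial α 1 * f)| ≤ coeffNorm f * M ^ (fdeg α + f.totalDegree) := by
  rw [map_mul, abs_mul, pow_add]
  have h1 : |eval x (monomial α (1:ℝ))| ≤ M ^ fdeg α := by
    rw [eval_monomial, one_mul, Finsupp.prod_fintype _ _ (by simp)]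
    exact aux_prod_bound α x M hx
  have := mul_le_mul h1 (aux_bound f x M hM hx) (abs_nonneg _) (by positivity)
  linarith

theorem aux_closed {n m : ℕ} (g : Fin m → MvPolynomial (Fin n) ℝ) : IsClosed (semialg g) := by
  unfold semialg
  rw [Set.ofPred_forall]
  exact isClosed_iInter fun j => isClosed_le continuous_const (MvPolynomial.continuous_eval _)

theorem aux_tendsto (C : ℝ) (N : ℕ) :
    Tendsto (fun M : ℝ => C * M ^ N * Real.exp (-M ^ 2 / 2)) atTop (𝓝 0) := by
  have h2 : Tendsto (fun M : ℝ => M ^ 2 / 2) atTop atTop :=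
    (tendsto_pow_atTop (by norm_num)).atTop_div_const (by norm_num)
  have h3 := ((Real.tendsto_pow_mul_exp_neg_atTop_nhds_zero N).comp h2).const_mul (2 ^ N)
  rw [mul_zero] at h3
  have h4 : Tendsto (fun M : ℝ => M ^ N * Real.exp (-M ^ 2 / 2)) atTop (𝓝 0) := by
    refine squeeze_zero' ?_ ?_ h3
    · filter_upwards [eventually_ge_atTop 0] with M hM
      positivity
    · filter_upwards [eventually_ge_atTop 1] with M hM
      simp only [Function.comp_apply]
      rw [← mul_assoc, ← mul_pow, neg_div]
      refine mul_le_mul_of_nonneg_right ?_ (Real.exp_pos _).le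
      refine pow_le_pow_left₀ (by linarith) ?_ _
      nlinarith
  have := h4.const_mul C
  rw [mul_zero] at this
  refine this.congr fun M => by ring

/-- Gaussian weight -/
noncomputable def gw {n : ℕ} (x : Fin n → ℝ) : ℝ :=
  (2 * Real.pi) ^ (-(n : ℝ) / 2) * Real.exp (-(∑ i, x i ^ 2) / 2)

theorem gw_nonneg {n : ℕ} (x : Fin n → ℝ) : 0 ≤ gw x := by unfold gw; positivity

theorem gw_cont {n : ℕ} : Continuous (gw (n := n)) := by unfold gw; fun_prop

theorem aux_toVolume {n : ℕ} (A : Set (Fin n → ℝ)) (hA : MeasurableSet A) (F : (Fin n → ℝ) → ℝ) :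
    ∫ x in A, F x ∂gaussianMeasure n = ∫ x in A, gw x * F x := by
  have hm : Measurable fun x : Fin n → ℝ => ENNReal.ofReal (gw x) :=
    gw_cont.measurable.ennreal_ofReal
  have := setIntegral_withDensity_eq_setIntegral_toReal_smul (μ := volume) hm
    (Eventually.of_forall fun x => ENNReal.ofReal_lt_top) F hA
  refine this.trans ?_
  refine integral_congr_ae (Eventually.of_forall fun x => ?_)
  simp only [ENNReal.toReal_ofReal (gw_nonneg x), smul_eq_mul]

theorem aux_gwDeriv {k : ℕ} (i : Fin (k+1)) (y : Fin k → ℝ)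
    (q : MvPolynomial (Fin (k+1)) ℝ) (t : ℝ) :
    HasDerivAt (fun t : ℝ => gw (i.insertNth (α := fun _ => ℝ) t y) *
        eval (i.insertNth (α := fun _ => ℝ) t y) q)
      (gw (i.insertNth (α := fun _ => ℝ) t y) *
        eval (i.insertNth (α := fun _ => ℝ) t y) (pderiv i q - X i * q)) t := by
  have h1 : HasDerivAt (fun t : ℝ => gw (i.insertNth (α := fun _ => ℝ) t y))
      (gw (i.insertNth (α := fun _ => ℝ) t y) * (-t)) t := by
    unfold gw
    simp only [Fin.sum_univ_succAbove _ i, Fin.insertNth_apply_same,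
      Fin.insertNth_apply_succAbove]
    have h2 : HasDerivAt (fun t : ℝ => -(t ^ 2 + ∑ j, y j ^ 2) / 2) (-t) t := by
      have := ((((hasDerivAt_id t).pow 2).add_const (∑ j, y j ^ 2)).neg).div_const 2
      exact this.congr_deriv (by simp; ring)
    have := (h2.exp).const_mul ((2 * Real.pi) ^ (-((k + 1 : ℕ) : ℝ) / 2))
    exact this.congr_deriv (by ring)
  have := h1.fun_mul (aux_hasDerivAt i y q t)
  refine this.congr_deriv ?_
  simp only [map_sub, map_mul, eval_X, Fin.insertNth_apply_same]
  ring

theorem aux_ballCoord {n : ℕ} (x : Fin n → ℝ) (M : ℝ) (hM : 0 ≤ M)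
    (hx : ∑ j, x j ^ 2 ≤ M ^ 2) (j : Fin n) : |x j| ≤ M := by
  apply abs_le_of_sq_le_sq _ hM
  refine (Finset.single_le_sum (f := fun j => x j ^ 2) (fun _ _ => sq_nonneg _)
    (Finset.mem_univ j)).trans hx

theorem aux_slice {k m : ℕ} (f : MvPolynomial (Fin (k+1)) ℝ) (α : Fin (k+1) →₀ ℕ)
    (g : Fin m → MvPolynomial (Fin (k+1)) ℝ)
    (h0 : ∀ x ∈ frontier (semialg g), eval x f = 0) (i : Fin (k+1)) (M : ℝ) (hM : 1 ≤ M)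
    (y : Fin k → ℝ) :
    |∫ t, (semialg g ∩ {x | ∑ j, x j ^ 2 ≤ M ^ 2}).indicator
        (fun x => gw x * eval x (pStokesG f i α)) (i.insertNth (α := fun _ => ℝ) t y)| ≤
      (Set.Icc (fun _ : Fin k => -M) (fun _ => M)).indicator
        (fun _ => 2 * ((2 * Real.pi) ^ (-((k + 1 : ℕ) : ℝ) / 2) * Real.exp (-M ^ 2 / 2) *
          (coeffNorm f * M ^ (fdeg α + f.totalDegree)))) y := by
  have hcn : 0 ≤ coeffNorm f := Finset.sum_nonneg fun _ _ => abs_nonneg _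
  have hsum : ∀ t : ℝ, ∑ j, (i.insertNth (α := fun _ => ℝ) t y : Fin (k+1) → ℝ) j ^ 2
      = t ^ 2 + ∑ j, y j ^ 2 := by
    intro t
    simp only [Fin.sum_univ_succAbove _ i, Fin.insertNth_apply_same,
      Fin.insertNth_apply_succAbove]
  by_cases hy : ∑ j, y j ^ 2 ≤ M ^ 2
  · have hyI : y ∈ Set.Icc (fun _ : Fin k => -M) (fun _ => M) :=
      ⟨fun j => (abs_le.1 (aux_ballCoord y M (by linarith) hy j)).1,
        fun j => (abs_le.1 (aux_ballCoord y M (by linarith) hy j)).2⟩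
    rw [Set.indicator_of_mem hyI]
    set b := Real.sqrt (M ^ 2 - ∑ j, y j ^ 2) with hb
    have hb0 : 0 ≤ b := Real.sqrt_nonneg _
    have hb2 : b ^ 2 = M ^ 2 - ∑ j, y j ^ 2 := Real.sq_sqrt (by linarith)
    have hcont : Continuous fun t : ℝ => (i.insertNth (α := fun _ => ℝ) t y : Fin (k+1) → ℝ) :=
      Continuous.finInsertNth (A := fun _ => ℝ) i continuous_id continuous_const
    set S : Set ℝ := {t | (i.insertNth (α := fun _ => ℝ) t y : Fin (k+1) → ℝ) ∈ semialg g} with hSdef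
    have hS : IsClosed S := (aux_closed g).preimage hcont
    set q : MvPolynomial (Fin (k+1)) ℝ := monomial α 1 * f with hq
    have hmain := aux_oneDim S hS
      (fun t : ℝ => gw (i.insertNth (α := fun _ => ℝ) t y) *
        eval (i.insertNth (α := fun _ => ℝ) t y) q)
      (fun t : ℝ => gw (i.insertNth (α := fun _ => ℝ) t y) *
        eval (i.insertNth (α := fun _ => ℝ) t y) (pderiv i q - X i * q))
      (fun t => aux_gwDeriv i y q t)
      ((gw_cont.comp hcont).mul ((MvPolynomial.continuous_eval _).comp hcont))
      (by
        intro t ht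
        have hfr : (i.insertNth (α := fun _ => ℝ) t y : Fin (k+1) → ℝ) ∈ frontier (semialg g) :=
          hcont.frontier_preimage_subset _ ht
        simp only [hq, map_mul, h0 _ hfr, mul_zero])
      (-b) b (by linarith)
    have heq : (fun t : ℝ => (semialg g ∩ {x | ∑ j, x j ^ 2 ≤ M ^ 2}).indicator
        (fun x => gw x * eval x (pStokesG f i α)) (i.insertNth (α := fun _ => ℝ) t y)) =
        (Set.Icc (-b) b).indicator (S.indicator (fun t : ℝ =>
          gw (i.insertNth (α := fun _ => ℝ) t y) *
          eval (i.insertNth (α := fun _ => ℝ) t y) (pderiv i q - X i * q))) := by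
      classical
      funext t
      have hiff : t ∈ Set.Icc (-b) b ↔
          (i.insertNth (α := fun _ => ℝ) t y : Fin (k+1) → ℝ) ∈
            {x : Fin (k+1) → ℝ | ∑ j, x j ^ 2 ≤ M ^ 2} := by
        rw [Set.mem_ofPred_eq, hsum, Set.mem_Icc, ← abs_le, ← sq_le_sq₀ (abs_nonneg _) hb0,
          sq_abs, hb2]
        constructor <;> intro h <;> linarith
      rw [Set.indicator_indicator, Set.indicator_apply, Set.indicator_apply]
      refine if_congr ?_ rfl rfl
      rw [Set.mem_inter_iff, Set.mem_inter_iff, hiff, and_comm]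
      rfl
    rw [heq, integral_indicator measurableSet_Icc]
    refine hmain.trans ?_
    have hend : ∀ t : ℝ, t ^ 2 = b ^ 2 →
        |gw (i.insertNth (α := fun _ => ℝ) t y : Fin (k+1) → ℝ) *
          eval (i.insertNth (α := fun _ => ℝ) t y) q| ≤
        (2 * Real.pi) ^ (-((k + 1 : ℕ) : ℝ) / 2) * Real.exp (-M ^ 2 / 2) *
          (coeffNorm f * M ^ (fdeg α + f.totalDegree)) := by
      intro t ht
      have hs : ∑ j, (i.insertNth (α := fun _ => ℝ) t y : Fin (k+1) → ℝ) j ^ 2 = M ^ 2 := by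
        rw [hsum, ht, hb2]; ring
      have hg : gw (i.insertNth (α := fun _ => ℝ) t y : Fin (k+1) → ℝ) =
          (2 * Real.pi) ^ (-((k + 1 : ℕ) : ℝ) / 2) * Real.exp (-M ^ 2 / 2) := by
        unfold gw; rw [hs]
      rw [abs_mul, abs_of_nonneg (gw_nonneg _), hg]
      refine mul_le_mul_of_nonneg_left ?_ (by positivity)
      exact aux_bound2 f α _ M hM (aux_ballCoord _ M (by linarith) hs.le)
    have e1 := hend (-b) (by ring)
    have e2 := hend b rfl
    linarith
  · have hz : (fun t : ℝ => (semialg g ∩ {x | ∑ j, x j ^ 2 ≤ M ^ 2}).indicator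
        (fun x => gw x * eval x (pStokesG f i α)) (i.insertNth (α := fun _ => ℝ) t y)) =
        fun _ => 0 := by
      funext t
      refine Set.indicator_of_notMem ?_ _
      rintro ⟨-, h⟩
      rw [Set.mem_ofPred_eq, hsum] at h
      nlinarith [sq_nonneg t]
    rw [hz, integral_zero, abs_zero]
    exact Set.indicator_nonneg (fun _ _ => by positivity) _

theorem aux_main {k m : ℕ} (f : MvPolynomial (Fin (k+1)) ℝ) (α : Fin (k+1) →₀ ℕ)
    (g : Fin m → MvPolynomial (Fin (k+1)) ℝ)
    (h0 : ∀ x ∈ frontier (semialg g), eval x f = 0) (i : Fin (k+1)) (M : ℝ) (hM : 1 ≤ M) :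
    |∫ x in semialg g ∩ {x | ∑ j, x j ^ 2 ≤ M ^ 2},
                eval x (pStokesG f i α) ∂gaussianMeasure (k+1)| ≤
      (2 * M) ^ k * (2 * ((2 * Real.pi) ^ (-((k + 1 : ℕ) : ℝ) / 2) * Real.exp (-M ^ 2 / 2) *
          (coeffNorm f * M ^ (fdeg α + f.totalDegree)))) := by
  set A : Set (Fin (k+1) → ℝ) := semialg g ∩ {x | ∑ j, x j ^ 2 ≤ M ^ 2} with hA
  have hAc : IsClosed A :=
    (aux_closed g).inter (isClosed_le (by fun_prop) continuous_const)
  have hAsub : A ⊆ Set.Icc (fun _ => -M) (fun _ => M) := fun x hx =>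
    ⟨fun j => (abs_le.1 (aux_ballCoord x M (by linarith) hx.2 j)).1,
        fun j => (abs_le.1 (aux_ballCoord x M (by linarith) hx.2 j)).2⟩
  have hAk : IsCompact A := isCompact_Icc.of_isClosed_subset hAc hAsub
  rw [aux_toVolume A hAc.measurableSet, ← integral_indicator hAc.measurableSet]
  set G : (Fin (k+1) → ℝ) → ℝ := A.indicator fun x => gw x * eval x (pStokesG f i α) with hG
  have hGi : Integrable G := by
    rw [hG, integrable_indicator_iff hAc.measurableSet]
    exact (gw_cont.mul (MvPolynomial.continuous_eval _)).continuousOn.integrableOn_compact hAk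
  have hmp := (volume_preserving_piFinSuccAbove (fun _ : Fin (k+1) => ℝ) i).symm
  rw [← hmp.integral_comp', Measure.volume_eq_prod, integral_prod_symm]
  · have hle : ∀ y : Fin k → ℝ, ‖∫ t, G ((MeasurableEquiv.piFinSuccAbove (fun _ : Fin (k+1) => ℝ) i).symm (t, y))‖ ≤ _ := fun y => aux_slice f α g h0 i M hM y
    refine (norm_integral_le_of_norm_le (g := (Set.Icc (fun _ : Fin k => -M) (fun _ => M)).indicator
        (fun _ => 2 * ((2 * Real.pi) ^ (-((k + 1 : ℕ) : ℝ) / 2) * Real.exp (-M ^ 2 / 2) *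
          (coeffNorm f * M ^ (fdeg α + f.totalDegree))))) ?_ (Eventually.of_forall hle)).trans ?_
    · rw [integrable_indicator_iff measurableSet_Icc]
      exact continuousOn_const.integrableOn_compact isCompact_Icc
    · rw [integral_indicator measurableSet_Icc, setIntegral_const, smul_eq_mul]
      refine le_of_eq ?_
      congr 1
      rw [measureReal_def, Real.volume_Icc_pi_toReal (fun _ => by linarith)]
      simp
      ring
  · rw [← Measure.volume_eq_prod]
    exact (hmp.integrable_comp_emb (MeasurableEquiv.measurableEmbedding _)).2 hGi

/-- quantitative truncation bound. For the Gaussian measure and `Ω_M = Ω ∩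
{‖x‖ ≤ M}`, there is a constant `C > 0` depending only on `n`, `f` and `α` such that,
whenever `f` vanishes on `∂Ω` for a basic closed semi-algebraic set `Ω`,
`|∫_{Ω_M} p_{i,α} dμ| ≤ C·M^{|α|+n+deg f}·e^{−M²/2}` for all `M ≥ 1`; in particular
`∫_{Ω_M} p_{i,α} dμ → 0` as `M → ∞`. -/
theorem stmt15 {n : ℕ} (f : MvPolynomial (Fin n) ℝ) (α : Fin n →₀ ℕ) :
    ∃ C : ℝ, 0 < C ∧
      ∀ (m : ℕ) (g : Fin m → MvPolynomial (Fin n) ℝ),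
        (∀ x ∈ frontier (semialg g), eval x f = 0) →
        ∀ i : Fin n,
          (∀ M : ℝ, 1 ≤ M →
            |∫ x in semialg g ∩ {x | ∑ j, x j ^ 2 ≤ M ^ 2},
                eval x (pStokesG f i α) ∂gaussianMeasure n| ≤
              C * M ^ (fdeg α + n + f.totalDegree) * Real.exp (-M ^ 2 / 2)) ∧
          Tendsto (fun M : ℝ =>
              ∫ x in semialg g ∩ {x | ∑ j, x j ^ 2 ≤ M ^ 2},
                eval x (pStokesG f i α) ∂gaussianMeasure n)
            atTop (𝓝 0) := by
  have hcn : 0 ≤ coeffNorm f := Finset.sum_nonneg fun _ _ => abs_nonneg _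
  have hB : 0 ≤ 2 ^ n * (2 * Real.pi) ^ (-(n : ℝ) / 2) * coeffNorm f := by positivity
  refine ⟨2 ^ n * (2 * Real.pi) ^ (-(n : ℝ) / 2) * coeffNorm f + 1, by linarith, ?_⟩
  intro m g h0 i
  have key : ∀ M : ℝ, 1 ≤ M →
            |∫ x in semialg g ∩ {x | ∑ j, x j ^ 2 ≤ M ^ 2},
                eval x (pStokesG f i α) ∂gaussianMeasure n| ≤
              (2 ^ n * (2 * Real.pi) ^ (-(n : ℝ) / 2) * coeffNorm f + 1) *
                M ^ (fdeg α + n + f.totalDegree) * Real.exp (-M ^ 2 / 2) := by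
    intro M hM
    obtain _ | k := n
    · exact i.elim0
    refine (aux_main f α g h0 i M hM).trans ?_
    have hstep : (2 ^ (k+1) * (2 * Real.pi) ^ (-((k + 1 : ℕ) : ℝ) / 2) * coeffNorm f) *
        M ^ (fdeg α + k + f.totalDegree) ≤
        (2 ^ (k+1) * (2 * Real.pi) ^ (-((k + 1 : ℕ) : ℝ) / 2) * coeffNorm f + 1) *
        M ^ (fdeg α + (k + 1) + f.totalDegree) := by
      refine mul_le_mul (by linarith) (pow_le_pow_right₀ hM (by omega)) (by positivity)
        (by linarith)
    refine le_trans (le_of_eq ?_)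
      (mul_le_mul_of_nonneg_right hstep (Real.exp_pos (-M ^ 2 / 2)).le)
    rw [mul_pow, pow_succ, pow_add, pow_add, pow_add]
    ring
  refine ⟨key, ?_⟩
  refine squeeze_zero_norm' ?_ (aux_tendsto
    (2 ^ n * (2 * Real.pi) ^ (-(n : ℝ) / 2) * coeffNorm f + 1) (fdeg α + n + f.totalDegree))
  filter_upwards [eventually_ge_atTop 1] with M hM
  exact key M hM
end
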